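/- For every integer n ≥ 2, Kac's random walk kernel K on SO(n) is √(1 − 1/C(n,2))-Lipschitz in the L² Wasserstein metric for the intrinsic metric D: for all probability measures μ, ν on SO(n), W_{D,2}(μK, νK) ≤ √(1 − 1/C(n,2)) · W_{D,2}(μ, ν). -/

import Mathlib

open MeasureTheory ENNReal Filter Topology Matrix

noncomputable section

/-- The (Borel) product measurable structure on matrices. -/
instance matrixMeasurableSpace {m n R : Type*} [MeasurableSpace R] :
    MeasurableSpace (Matrix m n R) :=
  (inferInstance : MeasurableSpace (m → n → R))

/-- `η` is a coupling of `μ` and `ν`: its two marginals are `μ` and `ν`. -/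
def IsCoupling {X : Type*} [MeasurableSpace X] (η : Measure (X × X)) (μ ν : Measure X) : Prop :=
  η.map Prod.fst = μ ∧ η.map Prod.snd = ν

/-- The `L^p` transportation cost (Wasserstein) distance associated with the distance
function `d`, with values in `ℝ≥0∞`:
`W_{d,p}(μ,ν) = inf { (∫ d(x,y)^p dη)^{1/p} : η a coupling of (μ,ν) }`. -/
def wassersteinE {X : Type*} [MeasurableSpace X] (d : X → X → ℝ≥0∞) (p : ℝ)
    (μ ν : Measure X) : ℝ≥0∞ :=
  ⨅ (η : Measure (X × X)) (_ : IsCoupling η μ ν), (∫⁻ z, d z.1 z.2 ^ p ∂η) ^ (1 / p)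

/-- The length of the curve `γ` over `[0,1]`, w.r.t. the distance function `d`:
the supremum, over all partitions `0 = t 0 ≤ t 1 ≤ ⋯ ≤ t k = 1` of `[0,1]`, of the sums of
the distances between consecutive points of the curve. -/
def pathLengthE {X : Type*} (d : X → X → ℝ≥0∞) (γ : ℝ → X) : ℝ≥0∞ :=
  ⨆ (k : ℕ) (t : Fin (k + 1) → ℝ) (_ : Monotone t) (_ : t 0 = 0) (_ : t (Fin.last k) = 1),
    ∑ i : Fin k, d (γ (t i.castSucc)) (γ (t i.succ))

/-- The intrinsic (length) distance on the set `S` induced by the distance function `d`: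
the infimum of `d`-lengths of continuous paths joining `a` to `b` inside `S`. -/
def intrinsicDistE {X : Type*} [TopologicalSpace X] (d : X → X → ℝ≥0∞) (S : Set X)
    (a b : X) : ℝ≥0∞ :=
  ⨅ (γ : ℝ → X) (_ : ContinuousOn γ (Set.Icc 0 1)) (_ : Set.MapsTo γ (Set.Icc 0 1) S)
    (_ : γ 0 = a) (_ : γ 1 = b), pathLengthE d γ

/-- `t` iterated steps of the Markov transition kernel `P`, started from the initial
distribution `μ` (so `kernelIterate P t μ = μP^t`). -/
def kernelIterate {X : Type*} [MeasurableSpace X] (P : X → Measure X) :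
    ℕ → Measure X → Measure X
  | 0, μ => μ
  | t + 1, μ => (kernelIterate P t μ).bind P

/-- A Haar probability measure for the multiplicative set `S`, viewed as a measure on the
ambient space: a probability measure carried by `S` that is invariant under left and right
translations by all elements of `S`. -/
def IsHaarLike {X : Type*} [MeasurableSpace X] [Mul X] (S : Set X) (μ : Measure X) : Prop :=
  IsProbabilityMeasure μ ∧ μ Sᶜ = 0 ∧
    ∀ a ∈ S, μ.map (fun x => a * x) = μ ∧ μ.map (fun x => x * a) = μ

/-- The Haar probability measure of a compact matrix group `S` (such as `SO(n)` or `U(n)`),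
viewed as a measure on the ambient matrix space.  For such `S` a translation-invariant
probability measure exists and is unique, so `haarLike S` is *the* Haar probability
measure of `S`. -/
def haarLike {X : Type*} [MeasurableSpace X] [Mul X] (S : Set X) : Measure X := by
  classical exact if h : ∃ μ, IsHaarLike S μ then h.choose else 0

/-- The set of pairs `1 ≤ i < j ≤ n` of indices. -/
def pairs (n : ℕ) : Finset (Fin n × Fin n) :=
  Finset.univ.filter fun p => p.1 < p.2

/-- The special orthogonal group `SO(n)`, as a subset of the `n × n` real matrices. -/
def SO (n : ℕ) : Set (Matrix (Fin n) (Fin n) ℝ) :=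
  {a | a * aᵀ = 1 ∧ a.det = 1}

/-- The Hilbert–Schmidt (Frobenius) distance `‖a - b‖_hs = √(Tr((a-b)ᵀ(a-b)))` between real
matrices, as an `ℝ≥0∞`-valued distance function. -/
def hsDist {n : ℕ} (a b : Matrix (Fin n) (Fin n) ℝ) : ℝ≥0∞ :=
  ENNReal.ofReal (Real.sqrt (Matrix.trace ((a - b)ᵀ * (a - b))))

/-- The intrinsic (Riemannian/length) metric `D` on `SO(n)` induced by the Hilbert–Schmidt
norm: the infimum of `hs`-lengths of continuous paths inside `SO(n)`. -/
def DSO (n : ℕ) (a b : Matrix (Fin n) (Fin n) ℝ) : ℝ≥0∞ :=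
  intrinsicDistE hsDist (SO n) a b

/-- The rotation `R(i,j,θ)` by the angle `θ` of the plane spanned by the `i`-th and `j`-th
canonical basis vectors: `R e_i = cos θ e_i + sin θ e_j`, `R e_j = cos θ e_j - sin θ e_i`,
and `R e_k = e_k` for `k ∉ {i,j}`. -/
def kacRot {n : ℕ} (i j : Fin n) (θ : ℝ) : Matrix (Fin n) (Fin n) ℝ :=
  Matrix.of fun k l =>
    if k = i ∧ l = i then Real.cos θ
    else if k = j ∧ l = i then Real.sin θ
    else if k = i ∧ l = j then -Real.sin θ
    else if k = j ∧ l = j then Real.cos θ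
    else if k = l then 1 else 0

/-- The uniform probability measure on the angle interval `[0, 2π]`. -/
def uniformAngle : Measure ℝ :=
  (ENNReal.ofReal (2 * Real.pi))⁻¹ • MeasureTheory.volume.restrict (Set.Icc 0 (2 * Real.pi))

/-- The transition kernel of Kac's random walk on `SO(n)`:
`K_x = (1/(2π·C(n,2))) ∑_{1≤i<j≤n} ∫₀^{2π} δ_{R(i,j,θ)·x} dθ`. -/
def kacKernel (n : ℕ) (x : Matrix (Fin n) (Fin n) ℝ) : Measure (Matrix (Fin n) (Fin n) ℝ) :=
  (n.choose 2 : ℝ≥0∞)⁻¹ •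
    ∑ p ∈ pairs n, uniformAngle.map fun θ => kacRot p.1 p.2 θ * x

/-! ### Length metrics -/

theorem pathLengthE_edist {X : Type*} [PseudoEMetricSpace X] (γ : ℝ → X) :
    pathLengthE (fun a b => edist a b) γ = eVariationOn γ (Set.Icc 0 1) := by
  apply le_antisymm
  · refine iSup_le fun k => iSup_le fun t => iSup_le fun ht => iSup_le fun h0 => iSup_le fun h1 => ?_
    let u : ℕ → ℝ := fun i => t ⟨min i k, by omega⟩
    have hu : Monotone u := fun i j hij => ht (by simp only [Fin.mk_le_mk]; omega)
    have hmem : ∀ i, u i ∈ Set.Icc (0 : ℝ) 1 := fun i =>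
      ⟨h0 ▸ ht (Fin.zero_le _), h1 ▸ ht (Fin.le_last _)⟩
    refine le_trans (le_of_eq ?_) (eVariationOn.sum_le (f := γ) (n := k) hu hmem)
    rw [← Fin.sum_univ_eq_sum_range (fun i => edist (γ (u (i + 1))) (γ (u i))) k]
    refine Finset.sum_congr rfl fun i _ => ?_
    rw [edist_comm]
    have h1 : t i.castSucc = u i := by
      simp only [u]; congr 1; ext; simp
    have h2 : t i.succ = u (i + 1) := by
      simp only [u]; congr 1; ext; simp
    rw [h1, h2]
  · refine iSup_le fun ⟨m, u, hu, hmem⟩ => ?_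
    let v : ℕ → ℝ := fun i => if i = 0 then 0 else if i = m + 2 then 1 else u (i - 1)
    have hv0 : v 0 = 0 := by simp [v]
    have hv1 : v (m + 2) = 1 := by simp [v]
    have hvs : ∀ i ≤ m, v (i + 1) = u i := fun i hi => by
      simp only [v]; rw [if_neg (by omega), if_neg (by omega)]; rfl
    have hvmono : ∀ i j, i ≤ j → j ≤ m + 2 → v i ≤ v j := by
      intro i j hij hj
      simp only [v]
      have hI := hmem (i - 1)
      have hJ := hmem (j - 1)
      have hIJ : u (i - 1) ≤ u (j - 1) := hu (by omega)
      split_ifs <;> first | omega | linarith [hI.1, hI.2, hJ.1, hJ.2]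
    refine le_trans ?_ (le_iSup_of_le (m + 2) <| le_iSup_of_le (fun i => v i) <|
      le_iSup_of_le (fun i j hij => hvmono i j hij (by omega)) <|
      le_iSup_of_le (by simpa using hv0) <| le_iSup_of_le (by simpa using hv1) le_rfl)
    have hs : ∑ i : Fin (m + 2), edist (γ (v (i.castSucc : Fin (m + 3)))) (γ (v i.succ)) =
        ∑ i ∈ Finset.range (m + 2), edist (γ (v i)) (γ (v (i + 1))) := by
      rw [← Fin.sum_univ_eq_sum_range (fun i => edist (γ (v i)) (γ (v (i + 1))))]
      simp
    rw [hs, Finset.sum_range_succ', Finset.sum_range_succ]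
    refine le_trans (le_of_eq (Finset.sum_congr rfl fun i hi => ?_))
      (le_trans le_self_add le_self_add)
    have hi' := Finset.mem_range.1 hi
    rw [hvs i hi'.le, hvs (i + 1) hi', edist_comm]

theorem intrinsicDistE_le_eVariationOn {X : Type*} [PseudoEMetricSpace X] {S : Set X} {a b : X}
    {γ : ℝ → X} (hγ : ContinuousOn γ (Set.Icc 0 1)) (hS : Set.MapsTo γ (Set.Icc 0 1) S)
    (h0 : γ 0 = a) (h1 : γ 1 = b) :
    intrinsicDistE (fun a b => edist a b) S a b ≤ eVariationOn γ (Set.Icc 0 1) := by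
  rw [← pathLengthE_edist]
  exact iInf_le_of_le γ <| iInf_le_of_le hγ <| iInf_le_of_le hS <| iInf_le_of_le h0 <|
    iInf_le_of_le h1 le_rfl

theorem intrinsicDistE_self {X : Type*} [PseudoEMetricSpace X] {S : Set X} {a : X} (ha : a ∈ S) :
    intrinsicDistE (fun a b => edist a b) S a a = 0 := by
  refine le_antisymm ?_ (zero_le)
  refine (intrinsicDistE_le_eVariationOn (γ := fun _ => a) continuousOn_const
    (fun _ _ => ha) rfl rfl).trans (le_of_eq ?_)
  refine eVariationOn.constant_on ?_
  rintro _ ⟨_, _, rfl⟩ _ ⟨_, _, rfl⟩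
  rfl

theorem intrinsicDistE_comm_le {X : Type*} [PseudoEMetricSpace X] (S : Set X) (a b : X) :
    intrinsicDistE (fun a b => edist a b) S a b ≤ intrinsicDistE (fun a b => edist a b) S b a := by
  refine le_iInf fun γ => le_iInf fun hγ => le_iInf fun hS => le_iInf fun h0 => le_iInf fun h1 => ?_
  have hmaps : Set.MapsTo (fun t : ℝ => 1 - t) (Set.Icc 0 1) (Set.Icc 0 1) := fun t ht =>
    ⟨by linarith [ht.2], by linarith [ht.1]⟩
  rw [pathLengthE_edist]
  refine (intrinsicDistE_le_eVariationOn (γ := γ ∘ fun t => 1 - t)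
    (hγ.comp (by fun_prop) hmaps) (hS.comp hmaps) (by simpa using h1) (by simpa using h0)).trans ?_
  exact eVariationOn.comp_le_of_antitoneOn _ _ (fun x _ y _ h => sub_le_sub_left h 1) hmaps

theorem intrinsicDistE_triangle {X : Type*} [PseudoEMetricSpace X] (S : Set X) (a b c : X) :
    intrinsicDistE (fun a b => edist a b) S a c ≤
      intrinsicDistE (fun a b => edist a b) S a b + intrinsicDistE (fun a b => edist a b) S b c := by
  have key : ∀ γ₁ γ₂ : ℝ → X, ContinuousOn γ₁ (Set.Icc 0 1) → ContinuousOn γ₂ (Set.Icc 0 1) →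
      Set.MapsTo γ₁ (Set.Icc 0 1) S → Set.MapsTo γ₂ (Set.Icc 0 1) S → γ₁ 0 = a → γ₁ 1 = b →
      γ₂ 0 = b → γ₂ 1 = c → intrinsicDistE (fun a b => edist a b) S a c ≤
        eVariationOn γ₁ (Set.Icc 0 1) + eVariationOn γ₂ (Set.Icc 0 1) := by
    intro γ₁ γ₂ hc₁ hc₂ hS₁ hS₂ h10 h11 h20 h21
    let γ : ℝ → X := fun t => if t ≤ 1 / 2 then γ₁ (2 * t) else γ₂ (2 * t - 1)
    have e₁ : Set.EqOn γ (γ₁ ∘ fun t => 2 * t) (Set.Icc 0 (1 / 2)) := fun t ht => if_pos ht.2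
    have e₂ : Set.EqOn γ (γ₂ ∘ fun t => 2 * t - 1) (Set.Icc (1 / 2) 1) := by
      intro t ht
      rcases eq_or_lt_of_le ht.1 with h | h
      · subst h; simp [γ, h11, h20]
      · exact if_neg (not_le.2 h)
    have m₁ : Set.MapsTo (fun t : ℝ => 2 * t) (Set.Icc 0 (1 / 2)) (Set.Icc 0 1) := fun t ht =>
      ⟨by linarith [ht.1], by linarith [ht.2]⟩
    have m₂ : Set.MapsTo (fun t : ℝ => 2 * t - 1) (Set.Icc (1 / 2) 1) (Set.Icc 0 1) := fun t ht =>
      ⟨by linarith [ht.1], by linarith [ht.2]⟩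
    have hU : Set.Icc (0 : ℝ) 1 = Set.Icc 0 (1 / 2) ∪ Set.Icc (1 / 2) 1 :=
      (Set.Icc_union_Icc_eq_Icc (by norm_num) (by norm_num)).symm
    have hcont : ContinuousOn γ (Set.Icc 0 1) := by
      rw [hU]
      refine ContinuousOn.union_of_isClosed ?_ ?_ isClosed_Icc isClosed_Icc
      · exact (hc₁.comp (by fun_prop) m₁).congr e₁
      · exact (hc₂.comp (by fun_prop) m₂).congr e₂
    have hmaps : Set.MapsTo γ (Set.Icc 0 1) S := by
      rw [hU]
      rintro t (ht | ht)
      · rw [e₁ ht]; exact hS₁ (m₁ ht)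
      · rw [e₂ ht]; exact hS₂ (m₂ ht)
    refine (intrinsicDistE_le_eVariationOn hcont hmaps (by simp [γ, h10])
      (by norm_num [γ, h21])).trans ?_
    have hadd := eVariationOn.Icc_add_Icc γ (s := Set.univ) (a := 0) (b := 1 / 2) (c := 1)
      (by norm_num) (by norm_num) trivial
    simp only [Set.univ_inter] at hadd
    rw [← hadd, eVariationOn.congr e₁, eVariationOn.congr e₂]
    gcongr
    · exact eVariationOn.comp_le_of_monotoneOn _ _ (fun x _ y _ h => by simpa using h) m₁
    · exact eVariationOn.comp_le_of_monotoneOn _ _ (fun x _ y _ h => by simpa using h) m₂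
  conv_rhs => unfold intrinsicDistE
  simp only [ENNReal.iInf_add, ENNReal.add_iInf, pathLengthE_edist]
  refine le_iInf fun γ₂ => le_iInf fun hc₂ => le_iInf fun hS₂ => le_iInf fun h20 => le_iInf fun h21 =>
    le_iInf fun γ₁ => le_iInf fun hc₁ => le_iInf fun hS₁ => le_iInf fun h10 => le_iInf fun h11 => ?_
  exact key γ₁ γ₂ hc₁ hc₂ hS₁ hS₂ h10 h11 h20 h21

/-! ### The group `SO(n)` and its intrinsic metric -/

section Frobenius

open scoped Matrix.Norms.Frobenius

variable {n : ℕ}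

theorem frobenius_norm_sq_eq_trace (A : Matrix (Fin n) (Fin n) ℝ) : ‖A‖ ^ 2 = (Aᵀ * A).trace := by
  rw [frobenius_norm_def, ← Real.sqrt_eq_rpow, Real.sq_sqrt (by positivity), Finset.sum_comm]
  simp [Matrix.trace, Matrix.mul_apply, pow_two]

theorem hsDist_eq_edist :
    (hsDist : Matrix (Fin n) (Fin n) ℝ → Matrix (Fin n) (Fin n) ℝ → ℝ≥0∞) =
      fun a b => edist a b := by
  funext a b
  rw [hsDist, ← frobenius_norm_sq_eq_trace, Real.sqrt_sq (norm_nonneg _), edist_dist, dist_eq_norm]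

theorem DSO_eq_intrinsicDistE (a b : Matrix (Fin n) (Fin n) ℝ) :
    DSO n a b = intrinsicDistE (fun a b => edist a b) (SO n) a b := by
  rw [DSO, hsDist_eq_edist]

theorem DSO_self {a : Matrix (Fin n) (Fin n) ℝ} (ha : a ∈ SO n) : DSO n a a = 0 := by
  rw [DSO_eq_intrinsicDistE]
  exact intrinsicDistE_self ha

theorem DSO_comm (a b : Matrix (Fin n) (Fin n) ℝ) : DSO n a b = DSO n b a := by
  rw [DSO_eq_intrinsicDistE, DSO_eq_intrinsicDistE]
  exact le_antisymm (intrinsicDistE_comm_le _ _ _) (intrinsicDistE_comm_le _ _ _)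

theorem DSO_triangle (a b c : Matrix (Fin n) (Fin n) ℝ) : DSO n a c ≤ DSO n a b + DSO n b c := by
  simp only [DSO_eq_intrinsicDistE]
  exact intrinsicDistE_triangle _ _ _ _

theorem DSO_eq_top {a b : Matrix (Fin n) (Fin n) ℝ} (h : ¬(a ∈ SO n ∧ b ∈ SO n)) :
    DSO n a b = ⊤ := by
  refine top_unique <| le_iInf fun γ => le_iInf fun _ => le_iInf fun hS => le_iInf fun h0 =>
    le_iInf fun h1 => (h ⟨?_, ?_⟩).elim
  · exact h0 ▸ hS (by simp)
  · exact h1 ▸ hS (by simp)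

theorem transpose_mul_self_of_mem_SO {a : Matrix (Fin n) (Fin n) ℝ} (ha : a ∈ SO n) :
    aᵀ * a = 1 :=
  mul_eq_one_comm.1 ha.1

theorem one_mem_SO : (1 : Matrix (Fin n) (Fin n) ℝ) ∈ SO n := by simp [SO]

theorem mul_mem_SO {a b : Matrix (Fin n) (Fin n) ℝ} (ha : a ∈ SO n) (hb : b ∈ SO n) :
    a * b ∈ SO n := by
  refine ⟨?_, by rw [det_mul, ha.2, hb.2, one_mul]⟩
  rw [transpose_mul, Matrix.mul_assoc, ← Matrix.mul_assoc b, hb.1, Matrix.one_mul, ha.1]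

theorem transpose_mem_SO {a : Matrix (Fin n) (Fin n) ℝ} (ha : a ∈ SO n) : aᵀ ∈ SO n :=
  ⟨by rw [transpose_transpose, transpose_mul_self_of_mem_SO ha], by rw [det_transpose, ha.2]⟩

theorem isClosed_SO : IsClosed (SO n) := by
  have h1 : IsClosed {a : Matrix (Fin n) (Fin n) ℝ | a * aᵀ = 1} :=
    isClosed_eq (by fun_prop) continuous_const
  have h2 : IsClosed {a : Matrix (Fin n) (Fin n) ℝ | a.det = 1} :=
    isClosed_eq (by fun_prop) continuous_const
  exact h1.inter h2

theorem frobenius_norm_mul_left_of_mem_SO {u : Matrix (Fin n) (Fin n) ℝ} (hu : u ∈ SO n)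
    (M : Matrix (Fin n) (Fin n) ℝ) : ‖u * M‖ = ‖M‖ := by
  rw [← sq_eq_sq₀ (norm_nonneg _) (norm_nonneg _), frobenius_norm_sq_eq_trace,
    frobenius_norm_sq_eq_trace, transpose_mul, Matrix.mul_assoc, ← Matrix.mul_assoc uᵀ,
    transpose_mul_self_of_mem_SO hu, Matrix.one_mul]

theorem frobenius_norm_mul_right_of_mem_SO {u : Matrix (Fin n) (Fin n) ℝ} (hu : u ∈ SO n)
    (M : Matrix (Fin n) (Fin n) ℝ) : ‖M * u‖ = ‖M‖ := by
  rw [← frobenius_norm_transpose, transpose_mul,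
    frobenius_norm_mul_left_of_mem_SO (transpose_mem_SO hu), frobenius_norm_transpose]

theorem DSO_mul_mul_le {u v : Matrix (Fin n) (Fin n) ℝ} (hu : u ∈ SO n) (hv : v ∈ SO n)
    (a b : Matrix (Fin n) (Fin n) ℝ) : DSO n (u * a * v) (u * b * v) ≤ DSO n a b := by
  conv_rhs => rw [DSO_eq_intrinsicDistE]
  rw [DSO_eq_intrinsicDistE]
  refine le_iInf fun γ => le_iInf fun hγ => le_iInf fun hS => le_iInf fun h0 => le_iInf fun h1 => ?_
  rw [pathLengthE_edist]
  refine (intrinsicDistE_le_eVariationOn (γ := fun t => u * γ t * v)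
    ((continuousOn_const.mul hγ).mul continuousOn_const)
    (fun t ht => mul_mem_SO (mul_mem_SO hu (hS ht)) hv) (by rw [h0]) (by rw [h1])).trans
    (le_of_eq ?_)
  simp only [eVariationOn, edist_dist, dist_eq_norm, ← Matrix.mul_sub, ← Matrix.sub_mul,
    frobenius_norm_mul_left_of_mem_SO hu, frobenius_norm_mul_right_of_mem_SO hv]

theorem DSO_mul_left_le {u : Matrix (Fin n) (Fin n) ℝ} (hu : u ∈ SO n)
    (a b : Matrix (Fin n) (Fin n) ℝ) : DSO n (u * a) (u * b) ≤ DSO n a b := by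
  simpa using DSO_mul_mul_le hu one_mem_SO a b

theorem DSO_mul_right_le {v : Matrix (Fin n) (Fin n) ℝ} (hv : v ∈ SO n)
    (a b : Matrix (Fin n) (Fin n) ℝ) : DSO n (a * v) (b * v) ≤ DSO n a b := by
  simpa using DSO_mul_mul_le one_mem_SO hv a b

/-! ### The Cayley transform -/

theorem frobenius_norm_le_one_add_skew_mul {X : Matrix (Fin n) (Fin n) ℝ} (hX : Xᵀ = -X)
    (M : Matrix (Fin n) (Fin n) ℝ) : ‖M‖ ≤ ‖(1 + X) * M‖ := by
  refine le_of_sq_le_sq ?_ (norm_nonneg _)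
  have h : ((1 + X) * M)ᵀ * ((1 + X) * M) = Mᵀ * M + (X * M)ᵀ * (X * M) := by
    simp only [transpose_mul, transpose_add, transpose_one, hX]
    noncomm_ring
  rw [frobenius_norm_sq_eq_trace ((1 + X) * M), h, trace_add, ← frobenius_norm_sq_eq_trace,
    ← frobenius_norm_sq_eq_trace]
  nlinarith [sq_nonneg ‖X * M‖]

theorem det_ne_zero_of_mul_left_injective {A : Matrix (Fin n) (Fin n) ℝ}
    (h : ∀ M : Matrix (Fin n) (Fin n) ℝ, A * M = 0 → M = 0) : A.det ≠ 0 := by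
  intro hdet
  obtain ⟨v, hv, hAv⟩ := exists_mulVec_eq_zero_iff.2 hdet
  apply hv
  have h0 := h (Matrix.of fun i _ => v i) (by
    ext i j
    simpa [Matrix.mul_apply, mulVec, dotProduct] using congrFun hAv i)
  funext i
  simpa using congrFun (congrFun h0 i) i

theorem isUnit_det_one_add_skew {X : Matrix (Fin n) (Fin n) ℝ} (hX : Xᵀ = -X) :
    IsUnit (1 + X).det := by
  refine isUnit_iff_ne_zero.2 (det_ne_zero_of_mul_left_injective fun M hM => ?_)
  have := frobenius_norm_le_one_add_skew_mul hX M
  rw [hM, norm_zero] at this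
  exact norm_le_zero_iff.1 this

theorem frobenius_norm_one_add_skew_inv_mul_le {X : Matrix (Fin n) (Fin n) ℝ} (hX : Xᵀ = -X)
    (M : Matrix (Fin n) (Fin n) ℝ) : ‖(1 + X)⁻¹ * M‖ ≤ ‖M‖ := by
  have h := frobenius_norm_le_one_add_skew_mul hX ((1 + X)⁻¹ * M)
  rwa [Matrix.mul_nonsing_inv_cancel_left _ _ (isUnit_det_one_add_skew hX)] at h

theorem frobenius_norm_mul_one_add_skew_inv_le {X : Matrix (Fin n) (Fin n) ℝ} (hX : Xᵀ = -X)
    (M : Matrix (Fin n) (Fin n) ℝ) : ‖M * (1 + X)⁻¹‖ ≤ ‖M‖ := by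
  have h := frobenius_norm_one_add_skew_inv_mul_le (X := -X) (by rw [transpose_neg, hX]) Mᵀ
  rwa [← frobenius_norm_transpose, transpose_mul, transpose_nonsing_inv, transpose_add,
    transpose_one, hX, ← frobenius_norm_transpose M]

/-- The Cayley transform of a skew-symmetric matrix. -/
def cayley (X : Matrix (Fin n) (Fin n) ℝ) : Matrix (Fin n) (Fin n) ℝ :=
  (2 : ℝ) • (1 + X)⁻¹ - 1

theorem cayley_zero : cayley (0 : Matrix (Fin n) (Fin n) ℝ) = 1 := by
  rw [cayley, add_zero, inv_one, two_smul]; abel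

theorem cayley_eq_mul {X : Matrix (Fin n) (Fin n) ℝ} (hX : Xᵀ = -X) :
    cayley X = (1 - X) * (1 + X)⁻¹ := by
  have h : (1 + X) * (1 + X)⁻¹ = 1 := mul_nonsing_inv _ (isUnit_det_one_add_skew hX)
  have h2 : (1 - X) = (2 : ℝ) • (1 : Matrix (Fin n) (Fin n) ℝ) - (1 + X) := by
    rw [two_smul]; abel
  rw [cayley, h2, Matrix.sub_mul, h, Matrix.smul_mul, Matrix.one_mul]

theorem cayley_mem_SO {X : Matrix (Fin n) (Fin n) ℝ} (hX : Xᵀ = -X) : cayley X ∈ SO n := by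
  have hu := isUnit_det_one_add_skew hX
  have ht : (1 + X)ᵀ = 1 - X := by rw [transpose_add, transpose_one, hX, sub_eq_add_neg]
  have ht' : (1 - X)ᵀ = 1 + X := by rw [← ht, transpose_transpose]
  have hdet : (1 - X).det = (1 + X).det := by rw [← ht, det_transpose]
  have hu' : IsUnit (1 - X).det := hdet ▸ hu
  have hcomm : (1 - X) * (1 + X) = (1 + X) * (1 - X) := by noncomm_ring
  rw [cayley_eq_mul hX]
  constructor
  · rw [transpose_mul, transpose_nonsing_inv, ht, ht', Matrix.mul_assoc,
      ← Matrix.mul_assoc (1 + X)⁻¹, ← Matrix.mul_inv_rev, hcomm, Matrix.mul_inv_rev,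
      Matrix.mul_assoc, Matrix.nonsing_inv_mul _ hu, Matrix.mul_one, Matrix.mul_nonsing_inv _ hu']
  · rw [det_mul, hdet, det_nonsing_inv, Ring.mul_inverse_cancel _ hu]

theorem frobenius_norm_cayley_sub_le {X Y : Matrix (Fin n) (Fin n) ℝ} (hX : Xᵀ = -X)
    (hY : Yᵀ = -Y) : ‖cayley X - cayley Y‖ ≤ 2 * ‖X - Y‖ := by
  have h : cayley X - cayley Y = (2 : ℝ) • ((1 + X)⁻¹ * ((Y - X) * (1 + Y)⁻¹)) := by
    have h1 : Y - X = (1 + Y) - (1 + X) := by abel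
    rw [h1, Matrix.sub_mul, mul_nonsing_inv _ (isUnit_det_one_add_skew hY), Matrix.mul_sub,
      Matrix.mul_one, nonsing_inv_mul_cancel_left _ _ (isUnit_det_one_add_skew hX), cayley, cayley,
      smul_sub]
    abel
  rw [h, norm_smul, Real.norm_ofNat]
  have h1 := (frobenius_norm_one_add_skew_inv_mul_le hX ((Y - X) * (1 + Y)⁻¹)).trans
    (frobenius_norm_mul_one_add_skew_inv_le hY (Y - X))
  rw [norm_sub_rev Y X] at h1
  linarith

theorem DSO_one_cayley_le {X : Matrix (Fin n) (Fin n) ℝ} (hX : Xᵀ = -X) :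
    DSO n 1 (cayley X) ≤ ENNReal.ofReal (2 * ‖X‖) := by
  have hskew : ∀ t : ℝ, (t • X)ᵀ = -(t • X) := fun t => by rw [transpose_smul, hX, smul_neg]
  have hlip : LipschitzWith (2 * ‖X‖₊) (fun t : ℝ => cayley (t • X)) := by
    refine LipschitzWith.of_dist_le_mul fun s t => ?_
    rw [dist_eq_norm]
    refine (frobenius_norm_cayley_sub_le (hskew s) (hskew t)).trans (le_of_eq ?_)
    rw [← sub_smul, norm_smul, Real.dist_eq, Real.norm_eq_abs]
    push_cast
    ring
  rw [DSO_eq_intrinsicDistE]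
  refine (intrinsicDistE_le_eVariationOn (γ := fun t : ℝ => cayley (t • X))
    hlip.continuous.continuousOn (fun t _ => cayley_mem_SO (hskew t))
    (by simp [cayley_zero]) (by simp)).trans ?_
  have h1 := (hlip.lipschitzOnWith (s := Set.univ)).comp_eVariationOn_le (g := (id : ℝ → ℝ))
    (s := Set.Icc 0 1) (fun _ _ => trivial)
  have h2 : eVariationOn (id : ℝ → ℝ) (Set.Icc 0 1) = 1 := by simp
  rw [h2] at h1
  refine h1.trans (le_of_eq ?_)
  rw [mul_one, ENNReal.ofReal_mul zero_le_two, ofReal_norm]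
  simp [enorm]

theorem DSO_one_le_of_norm_sub_lt {a : Matrix (Fin n) (Fin n) ℝ} (ha : a ∈ SO n) {r : ℝ}
    (hr : r = ‖1 - a‖) (hr2 : r < 2) : DSO n 1 a ≤ ENNReal.ofReal (2 * r / (2 - r)) := by
  have hr0 : 0 ≤ r := hr ▸ norm_nonneg _
  have hdet : IsUnit (1 + a).det := by
    refine isUnit_iff_ne_zero.2 (det_ne_zero_of_mul_left_injective fun M hM => ?_)
    have h1 : (2 : ℝ) • M = (1 - a) * M := by
      have : (1 - a) * M = (2 : ℝ) • M - (1 + a) * M := by rw [two_smul]; noncomm_ring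
      rw [this, hM, sub_zero]
    have h2 : 2 * ‖M‖ ≤ r * ‖M‖ := by
      rw [hr, ← Real.norm_ofNat 2, ← norm_smul, h1]
      exact frobenius_norm_mul _ _
    exact norm_le_zero_iff.1 (by nlinarith [norm_nonneg M])
  set X := (1 - a) * (1 + a)⁻¹ with hXdef
  have hcomm : (1 - a) * (1 + a)⁻¹ = (1 + a)⁻¹ * (1 - a) := by
    have : (1 + a) * (1 - a) = (1 - a) * (1 + a) := by noncomm_ring
    calc (1 - a) * (1 + a)⁻¹ = (1 + a)⁻¹ * ((1 + a) * (1 - a)) * (1 + a)⁻¹ := by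
          rw [nonsing_inv_mul_cancel_left _ _ hdet]
      _ = (1 + a)⁻¹ * (1 - a) := by
          rw [this, ← Matrix.mul_assoc, mul_nonsing_inv_cancel_right _ _ hdet]
  have hskew : Xᵀ = -X := by
    have haa := transpose_mul_self_of_mem_SO ha
    have e1 : (1 + a)ᵀ = aᵀ * (1 + a) := by
      rw [Matrix.mul_add, haa, Matrix.mul_one, transpose_add, transpose_one, add_comm]
    have e2 : (1 - a)ᵀ = -(aᵀ * (1 - a)) := by
      rw [Matrix.mul_sub, haa, Matrix.mul_one, transpose_sub, transpose_one]; abel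
    have e3 : aᵀ⁻¹ = a := inv_eq_right_inv haa
    rw [hXdef, transpose_mul, transpose_nonsing_inv, e1, e2, Matrix.mul_inv_rev, e3, Matrix.mul_neg,
      Matrix.mul_assoc, ← Matrix.mul_assoc a, ha.1, Matrix.one_mul, hcomm]
  have hX1 : 1 + X = (2 : ℝ) • (1 + a)⁻¹ := by
    have : (1 - a) = (2 : ℝ) • (1 : Matrix (Fin n) (Fin n) ℝ) - (1 + a) := by rw [two_smul]; abel
    rw [hXdef, this, Matrix.sub_mul, mul_nonsing_inv _ hdet, Matrix.smul_mul, Matrix.one_mul]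
    abel
  have hcay : cayley X = a := by
    have hinv : (1 + X)⁻¹ = (2⁻¹ : ℝ) • (1 + a) := by
      refine inv_eq_right_inv ?_
      rw [hX1, Matrix.smul_mul, Matrix.mul_smul, smul_smul, nonsing_inv_mul _ hdet]
      norm_num
    rw [cayley, hinv, smul_smul]
    norm_num
  have hnorm : 2 * ‖X‖ ≤ r + r * ‖X‖ := by
    have h2 : (2 : ℝ) • X = (1 - a) + (1 - a) * X := by
      have : (1 - a) + (1 - a) * X = (1 - a) * (1 + X) := by rw [Matrix.mul_add, Matrix.mul_one]
      rw [this, hX1, Matrix.mul_smul]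
    calc 2 * ‖X‖ = ‖(2 : ℝ) • X‖ := by rw [norm_smul, Real.norm_ofNat]
      _ ≤ ‖1 - a‖ + ‖(1 - a) * X‖ := h2 ▸ norm_add_le _ _
      _ ≤ r + r * ‖X‖ := by rw [hr]; gcongr; exact frobenius_norm_mul _ _
  have := DSO_one_cayley_le hskew
  rw [hcay] at this
  refine this.trans (ENNReal.ofReal_le_ofReal ?_)
  rw [le_div_iff₀ (by linarith)]
  nlinarith

/-- Near the diagonal the intrinsic distance is almost the Hilbert–Schmidt distance. -/
theorem DSO_le_of_norm_sub_le {a b : Matrix (Fin n) (Fin n) ℝ} (ha : a ∈ SO n) (hb : b ∈ SO n)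
    {δ : ℝ} (hδ : δ ≤ 1) (hab : ‖a - b‖ ≤ δ) :
    DSO n a b ≤ ENNReal.ofReal ((1 + δ) * ‖a - b‖) := by
  have h1 : ‖1 - b * aᵀ‖ = ‖a - b‖ := by
    rw [← frobenius_norm_mul_right_of_mem_SO (transpose_mem_SO ha) (a - b), Matrix.sub_mul, ha.1]
  have h2 := DSO_one_le_of_norm_sub_lt (mul_mem_SO hb (transpose_mem_SO ha)) h1.symm (by linarith)
  have h3 := DSO_mul_right_le ha 1 (b * aᵀ)
  rw [Matrix.one_mul, Matrix.mul_assoc, transpose_mul_self_of_mem_SO ha, Matrix.mul_one] at h3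
  refine h3.trans (h2.trans (ENNReal.ofReal_le_ofReal ?_))
  have h0 := norm_nonneg (a - b)
  rw [div_le_iff₀ (by linarith)]
  have : 2 ≤ (1 + δ) * (2 - ‖a - b‖) := by nlinarith
  nlinarith

end Frobenius

section Rotation

open scoped Matrix.Norms.Frobenius

variable {n : ℕ}

/-! ### Plane rotations -/

theorem kacRot_eq_single {i j : Fin n} (hij : i ≠ j) (θ : ℝ) :
    kacRot i j θ = 1 + (Real.cos θ - 1) • (single i i (1 : ℝ) + single j j 1) +
      Real.sin θ • (single j i (1 : ℝ) - single i j 1) := by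
  ext k l
  simp only [kacRot, Matrix.of_apply, Matrix.add_apply, Matrix.sub_apply, Matrix.smul_apply,
    Matrix.single_apply, Matrix.one_apply, smul_eq_mul]
  by_cases h1 : k = i <;> by_cases h2 : l = i <;> by_cases h3 : k = j <;> by_cases h4 : l = j <;>
    simp_all [eq_comm]

theorem kacRot_zero {i j : Fin n} (hij : i ≠ j) : kacRot i j 0 = 1 := by
  simp [kacRot_eq_single hij]

theorem kacRot_mul_kacRot {i j : Fin n} (hij : i ≠ j) (θ φ : ℝ) :
    kacRot i j θ * kacRot i j φ = kacRot i j (θ + φ) := by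
  set P : Matrix (Fin n) (Fin n) ℝ := single i i (1 : ℝ) + single j j 1 with hP
  set J : Matrix (Fin n) (Fin n) ℝ := single j i (1 : ℝ) - single i j 1 with hJ
  have hPP : P * P = P := by
    simp [hP, Matrix.add_mul, Matrix.mul_add, hij, hij.symm]
  have hPJ : P * J = J := by
    simp [hP, hJ, Matrix.add_mul, Matrix.mul_sub, hij, hij.symm]
  have hJP : J * P = J := by
    simp [hP, hJ, Matrix.sub_mul, Matrix.mul_add, hij, hij.symm]
    abel
  have hJJ : J * J = -P := by
    simp [hP, hJ, Matrix.sub_mul, Matrix.mul_sub, hij, hij.symm]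
    abel
  rw [kacRot_eq_single hij, kacRot_eq_single hij, kacRot_eq_single hij, ← hP, ← hJ]
  simp only [Matrix.add_mul, Matrix.mul_add, Matrix.smul_mul, Matrix.mul_smul, hPP, hPJ, hJP, hJJ,
    Matrix.one_mul, Matrix.mul_one, Real.cos_add, Real.sin_add]
  module

theorem kacRot_transpose {i j : Fin n} (hij : i ≠ j) (θ : ℝ) :
    (kacRot i j θ)ᵀ = kacRot i j (-θ) := by
  rw [kacRot_eq_single hij, kacRot_eq_single hij]
  simp only [transpose_add, transpose_smul, transpose_sub, transpose_one, transpose_single,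
    Real.cos_neg, Real.sin_neg]
  module

theorem kacRot_mem_SO {i j : Fin n} (hij : i ≠ j) (θ : ℝ) : kacRot i j θ ∈ SO n := by
  have horth : kacRot i j θ * (kacRot i j θ)ᵀ = 1 := by
    rw [kacRot_transpose hij, kacRot_mul_kacRot hij, add_neg_cancel, kacRot_zero hij]
  refine ⟨horth, ?_⟩
  have h1 : (kacRot i j θ).det * (kacRot i j θ).det = 1 := by
    simpa using congrArg det horth
  have h2 : 0 ≤ (kacRot i j θ).det := by
    rw [← add_halves θ, ← kacRot_mul_kacRot hij, det_mul]
    exact mul_self_nonneg _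
  nlinarith

theorem continuous_kacRot (i j : Fin n) : Continuous (kacRot i j) := by
  refine continuous_pi fun k => continuous_pi fun l => ?_
  simp only [kacRot, Matrix.of_apply]
  split_ifs <;> fun_prop

theorem trace_kacRot_mul {i j : Fin n} (hij : i ≠ j) (θ : ℝ) (b : Matrix (Fin n) (Fin n) ℝ) :
    (kacRot i j θ * b).trace = b.trace + (Real.cos θ - 1) * (b i i + b j j) +
      Real.sin θ * (b i j - b j i) := by
  simp [kacRot_eq_single hij, Matrix.add_mul, Matrix.sub_mul, trace_single_mul]
  ring

theorem exists_cos_add_sin_eq_sqrt (p q : ℝ) :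
    ∃ φ : ℝ, p * Real.cos φ + q * Real.sin φ = Real.sqrt (p ^ 2 + q ^ 2) := by
  refine ⟨Complex.arg ⟨p, q⟩, ?_⟩
  have h1 := Complex.norm_mul_cos_arg ⟨p, q⟩
  have h2 := Complex.norm_mul_sin_arg ⟨p, q⟩
  have h3 : ‖(⟨p, q⟩ : ℂ)‖ = Real.sqrt (p ^ 2 + q ^ 2) := by
    rw [Complex.norm_def, Complex.normSq_mk]; ring_nf
  rw [h3] at h1 h2
  simp only at h1 h2
  set s := Real.sqrt (p ^ 2 + q ^ 2)
  set φ := Complex.arg ⟨p, q⟩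
  rw [← h1, ← h2]
  linear_combination s * Real.cos_sq_add_sin_sq φ

theorem frobenius_norm_one_sub_sq_of_mem_SO {a : Matrix (Fin n) (Fin n) ℝ} (ha : a ∈ SO n) :
    ‖1 - a‖ ^ 2 = 2 * n - 2 * a.trace := by
  rw [frobenius_norm_sq_eq_trace]
  have : (1 - a)ᵀ * (1 - a) = 1 - a - aᵀ + aᵀ * a := by
    rw [transpose_sub, transpose_one]; noncomm_ring
  rw [this, transpose_mul_self_of_mem_SO ha]
  simp [trace_add, trace_sub]
  ring

theorem sum_row_sq_of_mem_SO {a : Matrix (Fin n) (Fin n) ℝ} (ha : a ∈ SO n) (i : Fin n) :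
    ∑ k, a i k ^ 2 = 1 := by
  have h := congrFun (congrFun ha.1 i) i
  simpa [Matrix.mul_apply, pow_two] using h

theorem sq_add_sq_le_of_mem_SO {a : Matrix (Fin n) (Fin n) ℝ} (ha : a ∈ SO n) {i j : Fin n}
    (hij : i ≠ j) (k : Fin n) : a k i ^ 2 + a k j ^ 2 ≤ 1 := by
  rw [← sum_row_sq_of_mem_SO ha k, ← Finset.sum_pair (f := fun l => a k l ^ 2) hij]
  exact Finset.sum_le_univ_sum_of_nonneg fun _ => sq_nonneg _

/-- Rotating optimally in the plane `(i, j)` gains at least half of the square of the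
corresponding antisymmetric component. -/
theorem exists_norm_one_sub_kacRot_mul_sq_le {b : Matrix (Fin n) (Fin n) ℝ} (hb : b ∈ SO n)
    {i j : Fin n} (hij : i ≠ j) :
    ∃ φ : ℝ, ‖1 - kacRot i j φ * b‖ ^ 2 ≤ ‖1 - b‖ ^ 2 - (b i j - b j i) ^ 2 / 2 := by
  obtain ⟨φ, hφ⟩ := exists_cos_add_sin_eq_sqrt (b i i + b j j) (b i j - b j i)
  refine ⟨φ, ?_⟩
  rw [frobenius_norm_one_sub_sq_of_mem_SO (mul_mem_SO (kacRot_mem_SO hij φ) hb),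
    frobenius_norm_one_sub_sq_of_mem_SO hb, trace_kacRot_mul hij]
  set p := b i i + b j j with hp
  set q := b i j - b j i with hq
  set s := Real.sqrt (p ^ 2 + q ^ 2) with hs
  have hs2 : s ^ 2 = p ^ 2 + q ^ 2 := Real.sq_sqrt (by positivity)
  have hs0 : 0 ≤ s := Real.sqrt_nonneg _
  have hps : p ≤ s := Real.le_sqrt_of_sq_le (by nlinarith [sq_nonneg q])
  have hs4 : s ≤ 2 := by
    refine Real.sqrt_le_iff.2 ⟨by norm_num, ?_⟩
    have e1 := sq_add_sq_le_of_mem_SO hb hij i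
    have e2 := sq_add_sq_le_of_mem_SO hb hij j
    nlinarith [sq_nonneg (b i i - b j j), sq_nonneg (b i j + b j i)]
  nlinarith [mul_nonneg (sub_nonneg.2 hps) (by linarith : 0 ≤ 4 - (s + p))]

theorem sum_pairs_antisymm_sq (b : Matrix (Fin n) (Fin n) ℝ) :
    2 * ∑ p ∈ pairs n, (b p.1 p.2 - b p.2 p.1) ^ 2 = ‖b - bᵀ‖ ^ 2 := by
  have hnorm : ‖b - bᵀ‖ ^ 2 = ∑ p : Fin n × Fin n, (b p.1 p.2 - b p.2 p.1) ^ 2 := by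
    rw [frobenius_norm_def, ← Real.sqrt_eq_rpow, Real.sq_sqrt (by positivity),
      Fintype.sum_prod_type]
    simp
  have hswap : ∑ p ∈ Finset.univ.filter (fun p : Fin n × Fin n => p.2 < p.1),
      (b p.1 p.2 - b p.2 p.1) ^ 2 = ∑ p ∈ pairs n, (b p.1 p.2 - b p.2 p.1) ^ 2 := by
    refine Finset.sum_bij' (fun p _ => p.swap) (fun p _ => p.swap) ?_ ?_ ?_ ?_ ?_ <;>
      simp [pairs]
    intros; ring
  have hge : ∑ p ∈ Finset.univ.filter (fun p : Fin n × Fin n => ¬ p.1 < p.2),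
      (b p.1 p.2 - b p.2 p.1) ^ 2 = ∑ p ∈ Finset.univ.filter (fun p : Fin n × Fin n => p.2 < p.1),
      (b p.1 p.2 - b p.2 p.1) ^ 2 := by
    symm
    refine Finset.sum_subset (fun p => by simpa using le_of_lt) ?_
    intro p hp hp'
    simp only [Finset.mem_filter, Finset.mem_univ, true_and, not_lt] at hp hp'
    rw [le_antisymm hp hp', sub_self, zero_pow two_ne_zero]
  rw [hnorm, ← Finset.sum_filter_add_sum_filter_not Finset.univ (fun p : Fin n × Fin n => p.1 < p.2),
    hge, hswap, pairs]
  ring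

theorem card_pairs (n : ℕ) : (pairs n).card = n.choose 2 := by
  rw [pairs, Finset.card_filter, Fintype.sum_prod_type_right, Nat.choose_two_right,
    ← Finset.sum_range_id, ← Fin.sum_univ_eq_sum_range (fun i => i)]
  refine Finset.sum_congr rfl fun j _ => ?_
  rw [← Finset.card_filter, Finset.filter_gt_eq_Iio, Fin.card_Iio]

theorem two_mul_norm_sub_le_norm_sub_transpose {b : Matrix (Fin n) (Fin n) ℝ} (hb : b ∈ SO n) :
    2 * ‖1 - b‖ - ‖1 - b‖ ^ 2 ≤ ‖b - bᵀ‖ := by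
  have h1 : b * (b - bᵀ) = (1 - b) * (1 - b) - (2 : ℝ) • (1 - b) := by
    rw [Matrix.mul_sub, hb.1, two_smul]; noncomm_ring
  have h2 : ‖(2 : ℝ) • (1 - b)‖ = 2 * ‖1 - b‖ := by rw [norm_smul, Real.norm_ofNat]
  have h3 := frobenius_norm_mul (1 - b) (1 - b)
  have h4 := norm_sub_norm_le ((2 : ℝ) • (1 - b)) ((1 - b) * (1 - b))
  rw [norm_sub_rev, ← h1, frobenius_norm_mul_left_of_mem_SO hb, h2] at h4
  nlinarith

theorem ne_of_mem_pairs {p : Fin n × Fin n} (hp : p ∈ pairs n) : p.1 ≠ p.2 :=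
  (Finset.mem_filter.1 hp).2.ne

/-- Infinitesimal contraction of Kac's walk in the Hilbert–Schmidt distance. -/
theorem exists_sum_norm_sub_kacRot_mul_sq_le {x y : Matrix (Fin n) (Fin n) ℝ} (hx : x ∈ SO n)
    (hy : y ∈ SO n) (hxy : ‖x - y‖ ≤ 1) :
    ∃ φ : pairs n → ℝ, (∀ p, ‖x - kacRot p.1.1 p.1.2 (φ p) * y‖ ≤ ‖x - y‖) ∧
      ∑ p, ‖x - kacRot p.1.1 p.1.2 (φ p) * y‖ ^ 2 ≤
        (n.choose 2 - (1 - ‖x - y‖ / 2) ^ 2) * ‖x - y‖ ^ 2 := by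
  have hb := mul_mem_SO hy (transpose_mem_SO hx)
  set b := y * xᵀ with hbdef
  have hnorm : ∀ u : Matrix (Fin n) (Fin n) ℝ, ‖x - u * y‖ = ‖1 - u * b‖ := fun u => by
    rw [← frobenius_norm_mul_right_of_mem_SO (transpose_mem_SO hx) (x - u * y), Matrix.sub_mul,
      hx.1, Matrix.mul_assoc]
  have hnorm1 : ‖x - y‖ = ‖1 - b‖ := by simpa using hnorm 1
  choose φ hφ using fun p : pairs n => exists_norm_one_sub_kacRot_mul_sq_le hb (ne_of_mem_pairs p.2)
  simp only [hnorm, hnorm1] at hxy ⊢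
  refine ⟨φ, fun p => ?_, ?_⟩
  · refine le_of_sq_le_sq ?_ (norm_nonneg _)
    nlinarith [hφ p, sq_nonneg (b p.1.1 p.1.2 - b p.1.2 p.1.1)]
  · refine (Finset.sum_le_sum fun p _ => hφ p).trans ?_
    rw [Finset.sum_sub_distrib, ← Finset.sum_div,
      Finset.sum_coe_sort (pairs n) (fun p => (b p.1 p.2 - b p.2 p.1) ^ 2)]
    have h1 := sum_pairs_antisymm_sq b
    have h2 := two_mul_norm_sub_le_norm_sub_transpose hb
    have h0 := norm_nonneg (1 - b)
    have h3 : (2 * ‖1 - b‖ - ‖1 - b‖ ^ 2) ^ 2 ≤ ‖b - bᵀ‖ ^ 2 :=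
      pow_le_pow_left₀ (by nlinarith) h2 2
    simp only [Finset.sum_const, Finset.card_univ, Fintype.card_coe, card_pairs, nsmul_eq_mul]
    nlinarith

end Rotation

section Contraction

open scoped Matrix.Norms.Frobenius

variable {n : ℕ}

/-! ### Contraction along paths -/

theorem exists_DSO_kacRot_mul_le_of_norm_sub_le {x y : Matrix (Fin n) (Fin n) ℝ} (hx : x ∈ SO n)
    (hy : y ∈ SO n) (hn : 2 ≤ n) {δ : ℝ} (hδ : δ ≤ 1) (hxy : ‖x - y‖ ≤ δ) :
    ∃ (φ : pairs n → ℝ) (e : EuclideanSpace ℝ (pairs n)),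
      (∀ p, 0 ≤ e p ∧ DSO n x (kacRot p.1.1 p.1.2 (φ p) * y) ≤ ENNReal.ofReal (e p)) ∧
      ‖e‖ ≤ (1 + δ) * Real.sqrt (n.choose 2 - (1 - δ / 2) ^ 2) * ‖x - y‖ := by
  obtain ⟨φ, hφ, hsum⟩ := exists_sum_norm_sub_kacRot_mul_sq_le hx hy (hxy.trans hδ)
  have h0 := norm_nonneg (x - y)
  have hδ0 : 0 ≤ δ := h0.trans hxy
  have hN : (1 : ℝ) ≤ n.choose 2 := by exact_mod_cast Nat.choose_pos hn
  have hC : (0 : ℝ) ≤ n.choose 2 - (1 - δ / 2) ^ 2 := by nlinarith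
  refine ⟨φ, WithLp.toLp 2 fun p => (1 + δ) * ‖x - kacRot p.1.1 p.1.2 (φ p) * y‖,
    fun p => ⟨by positivity, ?_⟩, ?_⟩
  · exact DSO_le_of_norm_sub_le hx (mul_mem_SO (kacRot_mem_SO (ne_of_mem_pairs p.2) _) hy) hδ
      ((hφ p).trans hxy)
  · refine le_of_sq_le_sq ?_ (by positivity)
    rw [EuclideanSpace.norm_sq_eq, mul_pow, mul_pow, Real.sq_sqrt hC]
    simp only [Real.norm_eq_abs, sq_abs, mul_pow, ← Finset.mul_sum]
    rw [mul_assoc]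
    refine mul_le_mul_of_nonneg_left (hsum.trans ?_) (sq_nonneg _)
    refine mul_le_mul_of_nonneg_right ?_ (sq_nonneg _)
    nlinarith

theorem exists_DSO_kacRot_mul_le_of_chain (hn : 2 ≤ n) {δ : ℝ} (hδ : δ ≤ 1)
    (x : ℕ → Matrix (Fin n) (Fin n) ℝ) (hx : ∀ m, x m ∈ SO n) (k : ℕ)
    (hstep : ∀ m < k, ‖x m - x (m + 1)‖ ≤ δ) :
    ∃ (φ : pairs n → ℝ) (e : EuclideanSpace ℝ (pairs n)),
      (∀ p, 0 ≤ e p ∧ DSO n (x 0) (kacRot p.1.1 p.1.2 (φ p) * x k) ≤ ENNReal.ofReal (e p)) ∧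
      ‖e‖ ≤ (1 + δ) * Real.sqrt (n.choose 2 - (1 - δ / 2) ^ 2) *
        ∑ m ∈ Finset.range k, ‖x m - x (m + 1)‖ := by
  induction k with
  | zero =>
    refine ⟨fun _ => 0, 0, fun p => ⟨by simp, ?_⟩, by simp⟩
    rw [kacRot_zero (ne_of_mem_pairs p.2), Matrix.one_mul, DSO_self (hx 0)]
    exact zero_le
  | succ k ih =>
    obtain ⟨φ, e, he, hnorm⟩ := ih fun m hm => hstep m (by omega)
    obtain ⟨φ', e', he', hnorm'⟩ := exists_DSO_kacRot_mul_le_of_norm_sub_le (hx k) (hx (k + 1)) hn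
      hδ (hstep k (by omega))
    refine ⟨φ + φ', e + e', fun p => ⟨add_nonneg (he p).1 (he' p).1, ?_⟩, ?_⟩
    · have hp := ne_of_mem_pairs p.2
      rw [PiLp.add_apply, ENNReal.ofReal_add (he p).1 (he' p).1, Pi.add_apply,
        ← kacRot_mul_kacRot hp, Matrix.mul_assoc]
      exact (DSO_triangle _ _ _).trans (add_le_add (he p).2
        ((DSO_mul_left_le (kacRot_mem_SO hp _) _ _).trans (he' p).2))
    · rw [Finset.sum_range_succ, mul_add]
      exact (norm_add_le _ _).trans (add_le_add hnorm hnorm')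

theorem exists_sum_DSO_kacRot_mul_sq_le_pathLengthE (hn : 2 ≤ n) {δ : ℝ} (hδ0 : 0 < δ) (hδ : δ ≤ 1)
    {γ : ℝ → Matrix (Fin n) (Fin n) ℝ} (hγ : ContinuousOn γ (Set.Icc 0 1))
    (hS : Set.MapsTo γ (Set.Icc 0 1) (SO n)) :
    ∃ φ : pairs n → ℝ, ∑ p, DSO n (γ 0) (kacRot p.1.1 p.1.2 (φ p) * γ 1) ^ 2 ≤
      ENNReal.ofReal ((1 + δ) ^ 2 * (n.choose 2 - (1 - δ / 2) ^ 2)) * pathLengthE hsDist γ ^ 2 := by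
  have hN : (1 : ℝ) ≤ n.choose 2 := by exact_mod_cast Nat.choose_pos hn
  have hC : (0 : ℝ) ≤ n.choose 2 - (1 - δ / 2) ^ 2 := by nlinarith
  have huc := isCompact_Icc.uniformContinuousOn_of_continuous hγ
  obtain ⟨η, hη, hunif⟩ := Metric.uniformContinuousOn_iff.1 huc δ hδ0
  obtain ⟨k, hk⟩ := exists_nat_one_div_lt hη
  have hk0 : (0 : ℝ) < k + 1 := by positivity
  let t : ℕ → ℝ := fun m => min (m / (k + 1)) 1
  have ht : ∀ m, t m ∈ Set.Icc (0 : ℝ) 1 := fun m => ⟨by positivity, min_le_right _ _⟩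
  have htmono : Monotone t := fun a b hab => by
    simp only [t]; gcongr
  have ht0 : t 0 = 0 := by simp [t]
  have ht1 : t (k + 1) = 1 := by simp [t, hk0.ne']
  have hdist : ∀ m < k + 1, ‖γ (t m) - γ (t (m + 1))‖ ≤ δ := fun m hm => by
    rw [← dist_eq_norm]
    refine (hunif _ (ht m) _ (ht (m + 1)) ?_).le
    have hm' : (m : ℝ) + 1 ≤ k + 1 := by exact_mod_cast hm
    have e1 : t m = m / (k + 1) := min_eq_left (by rw [div_le_one hk0]; linarith)
    have e2 : t (m + 1) = (m + 1) / (k + 1) := by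
      simp only [t]; push_cast; exact min_eq_left (by rw [div_le_one hk0]; linarith)
    rw [e1, e2, dist_comm, Real.dist_eq, ← sub_div, add_sub_cancel_left, abs_of_pos (by positivity)]
    exact hk
  obtain ⟨φ, e, he, hnorm⟩ := exists_DSO_kacRot_mul_le_of_chain hn hδ (fun m => γ (t m))
    (fun m => hS (ht m)) (k + 1) hdist
  set s := ∑ m ∈ Finset.range (k + 1), ‖γ (t m) - γ (t (m + 1))‖ with hs
  have hs0 : 0 ≤ s := Finset.sum_nonneg fun _ _ => norm_nonneg _
  have hlen : ENNReal.ofReal s ≤ pathLengthE hsDist γ := by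
    rw [hsDist_eq_edist]
    refine le_trans (le_of_eq ?_) (le_iSup_of_le (k + 1) <| le_iSup_of_le (fun i => t i) <|
      le_iSup_of_le (fun i j hij => htmono hij) <|
      le_iSup_of_le (by simpa using ht0) <| le_iSup_of_le (by simpa using ht1) le_rfl)
    rw [hs, ENNReal.ofReal_sum_of_nonneg fun _ _ => norm_nonneg _,
      ← Fin.sum_univ_eq_sum_range (fun m => ENNReal.ofReal ‖γ (t m) - γ (t (m + 1))‖)]
    simp [edist_dist, dist_eq_norm]
  refine ⟨φ, ?_⟩
  simp only [ht0, ht1] at he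
  calc ∑ p, DSO n (γ 0) (kacRot p.1.1 p.1.2 (φ p) * γ 1) ^ 2
      ≤ ∑ p, ENNReal.ofReal (e p ^ 2) := by
        refine Finset.sum_le_sum fun p _ => ?_
        rw [ENNReal.ofReal_pow (he p).1]
        gcongr
        exact (he p).2
    _ = ENNReal.ofReal (‖e‖ ^ 2) := by
        rw [EuclideanSpace.norm_sq_eq, ENNReal.ofReal_sum_of_nonneg fun _ _ => by positivity]
        simp
    _ ≤ ENNReal.ofReal ((1 + δ) ^ 2 * (n.choose 2 - (1 - δ / 2) ^ 2) * s ^ 2) := by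
        refine ENNReal.ofReal_le_ofReal ((pow_le_pow_left₀ (norm_nonneg _) hnorm 2).trans_eq ?_)
        rw [mul_pow, mul_pow, Real.sq_sqrt hC]
    _ = ENNReal.ofReal ((1 + δ) ^ 2 * (n.choose 2 - (1 - δ / 2) ^ 2)) * ENNReal.ofReal s ^ 2 := by
        rw [ENNReal.ofReal_mul (by positivity), ENNReal.ofReal_pow hs0]
    _ ≤ _ := by gcongr

theorem exists_sum_DSO_kacRot_mul_sq_lt_of_ne_top (hn : 2 ≤ n) {x y : Matrix (Fin n) (Fin n) ℝ}
    (hD : DSO n x y ≠ ⊤) {ε : ℝ≥0∞} (hε : ε ≠ 0) :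
    ∃ φ : pairs n → ℝ, ∑ p, DSO n x (kacRot p.1.1 p.1.2 (φ p) * y) ^ 2 <
      ENNReal.ofReal (n.choose 2 - 1) * DSO n x y ^ 2 + ε := by
  set T := ENNReal.ofReal (n.choose 2 - 1) * DSO n x y ^ 2 + ε with hT
  let C : ℝ → ℝ≥0∞ := fun δ => ENNReal.ofReal ((1 + δ) ^ 2 * (n.choose 2 - (1 - δ / 2) ^ 2))
  have hD2 : DSO n x y ^ 2 ≠ ⊤ := ENNReal.pow_ne_top hD
  have hlt : C 0 * DSO n x y ^ 2 < T := by
    have : C 0 = ENNReal.ofReal (n.choose 2 - 1) := by simp [C]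
    rw [this, hT]
    exact ENNReal.lt_add_right (ENNReal.mul_ne_top ENNReal.ofReal_ne_top hD2) hε
  have hcont : Tendsto (fun δ => C δ * DSO n x y ^ 2) (𝓝[>] 0) (𝓝 (C 0 * DSO n x y ^ 2)) := by
    refine ENNReal.Tendsto.mul_const ?_ (Or.inr hD2)
    have : Continuous C := ENNReal.continuous_ofReal.comp (by fun_prop)
    exact (this.tendsto 0).mono_left nhdsWithin_le_nhds
  obtain ⟨δ, hδT, hδ0, hδ1⟩ := ((hcont.eventually_lt_const hlt).and
    (Ioc_mem_nhdsGT (zero_lt_one' ℝ))).exists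
  have hcont' : Tendsto (fun L : ℝ≥0∞ => C δ * L ^ 2) (𝓝[>] (DSO n x y))
      (𝓝 (C δ * DSO n x y ^ 2)) := by
    refine ENNReal.Tendsto.const_mul ?_ (Or.inr ENNReal.ofReal_ne_top)
    exact ((ENNReal.continuous_pow 2).tendsto _).mono_left nhdsWithin_le_nhds
  have : (𝓝[>] (DSO n x y)).NeBot := nhdsGT_neBot_of_exists_gt ⟨⊤, hD.lt_top⟩
  obtain ⟨L, hLT, hL⟩ := ((hcont'.eventually_lt_const hδT).and self_mem_nhdsWithin).exists
  have hL' : intrinsicDistE hsDist (SO n) x y < L := hL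
  simp only [intrinsicDistE, iInf_lt_iff] at hL'
  obtain ⟨γ, hγ, hS, rfl, rfl, hlen⟩ := hL'
  obtain ⟨φ, hφ⟩ := exists_sum_DSO_kacRot_mul_sq_le_pathLengthE hn hδ0 hδ1 hγ hS
  refine ⟨φ, hφ.trans_lt (lt_of_le_of_lt ?_ hLT)⟩
  gcongr

theorem exists_kacRot_mul_eq {x y : Matrix (Fin 2) (Fin 2) ℝ} (hx : x ∈ SO 2) (hy : y ∈ SO 2) :
    ∃ φ : ℝ, kacRot 0 1 φ * y = x := by
  have ha := mul_mem_SO hx (transpose_mem_SO hy)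
  obtain ⟨φ, hφ⟩ : ∃ φ : ℝ, kacRot 0 1 φ = x * yᵀ := by
    set a := x * yᵀ
    have h00 := congrFun (congrFun ha.1 0) 0
    have h11 := congrFun (congrFun ha.1 1) 1
    have hdet := ha.2
    simp [Matrix.mul_apply, Fin.sum_univ_two] at h00 h11
    rw [det_fin_two] at hdet
    have e1 : a 0 0 = a 1 1 := by nlinarith [sq_nonneg (a 0 0 - a 1 1), sq_nonneg (a 0 1 + a 1 0)]
    have e2 : a 0 1 = -a 1 0 := by nlinarith [sq_nonneg (a 0 0 - a 1 1), sq_nonneg (a 0 1 + a 1 0)]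
    obtain ⟨φ, hφ⟩ := exists_cos_add_sin_eq_sqrt (a 0 0) (a 1 0)
    have hs : Real.sqrt (a 0 0 ^ 2 + a 1 0 ^ 2) = 1 := by
      rw [Real.sqrt_eq_one]; rw [e2] at h00; linarith
    rw [hs] at hφ
    have hone : a 0 0 ^ 2 + a 1 0 ^ 2 = 1 := Real.sqrt_eq_one.1 hs
    have hcs := Real.cos_sq_add_sin_sq φ
    have hsq : (a 0 0 - Real.cos φ) ^ 2 + (a 1 0 - Real.sin φ) ^ 2 = 0 := by linarith
    have hc : a 0 0 = Real.cos φ := by nlinarith [sq_nonneg (a 0 0 - Real.cos φ)]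
    have hs' : a 1 0 = Real.sin φ := by nlinarith
    refine ⟨φ, ?_⟩
    ext k l
    fin_cases k <;> fin_cases l <;> simp [kacRot, ← hc, ← hs', e1, e2]
  exact ⟨φ, by rw [hφ, Matrix.mul_assoc, transpose_mul_self_of_mem_SO hy, Matrix.mul_one]⟩

/-! ### Regularity of the intrinsic metric -/

/-- The space `SO(n)` with its intrinsic metric. -/
def LengthSO (n : ℕ) : Type := SO n

instance : PseudoEMetricSpace (LengthSO n) where
  edist a b := DSO n a.1 b.1
  edist_self a := DSO_self a.2
  edist_comm a b := DSO_comm a.1 b.1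
  edist_triangle a b c := DSO_triangle a.1 b.1 c.1

/-- The identity map from `SO(n)` to `SO(n)` with its intrinsic metric. -/
def toLengthSO (a : SO n) : LengthSO n := a

theorem continuous_toLengthSO : Continuous (toLengthSO (n := n)) := by
  refine continuous_iff_continuousAt.2 fun a => EMetric.tendsto_nhds.2 fun ε hε => ?_
  have h1 : Tendsto (fun x : SO n => ENNReal.ofReal ((1 + 1) * ‖x.1 - a.1‖)) (𝓝 a) (𝓝 0) := by
    have : Continuous fun x : SO n => ENNReal.ofReal ((1 + 1) * ‖x.1 - a.1‖) :=
      ENNReal.continuous_ofReal.comp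
        (continuous_const.mul (continuous_subtype_val.sub continuous_const).norm)
    simpa using this.tendsto a
  have h2 : Tendsto (fun x : SO n => ‖x.1 - a.1‖) (𝓝 a) (𝓝 0) := by
    have : Continuous fun x : SO n => ‖x.1 - a.1‖ :=
      (continuous_subtype_val.sub continuous_const).norm
    simpa using this.tendsto a
  filter_upwards [h1.eventually_lt_const hε, h2.eventually_le_const zero_lt_one] with x hx hx1
  change DSO n x.1 a.1 < ε
  exact (DSO_le_of_norm_sub_le x.2 a.2 le_rfl hx1).trans_lt hx

theorem continuous_DSO : Continuous fun z : SO n × SO n => DSO n z.1 z.2 :=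
  (continuous_edist (α := LengthSO n)).comp
    (continuous_toLengthSO.prodMap continuous_toLengthSO)

theorem exists_sum_DSO_kacRot_mul_sq_lt (hn : 2 ≤ n) {x y : Matrix (Fin n) (Fin n) ℝ}
    (hx : x ∈ SO n) (hy : y ∈ SO n) {ε : ℝ≥0∞} (hε : ε ≠ 0)
    (htop : ENNReal.ofReal (n.choose 2 - 1) * DSO n x y ^ 2 ≠ ⊤) :
    ∃ φ : pairs n → ℝ, ∑ p, DSO n x (kacRot p.1.1 p.1.2 (φ p) * y) ^ 2 <
      ENNReal.ofReal (n.choose 2 - 1) * DSO n x y ^ 2 + ε := by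
  by_cases hD : DSO n x y = ⊤
  · have hn2 : n = 2 := by
      by_contra hne
      refine htop ?_
      have hlt : 1 < n.choose 2 := by
        have h3 : Nat.choose 3 2 ≤ n.choose 2 := Nat.choose_le_choose 2 (by omega)
        exact lt_of_lt_of_le (by decide) h3
      have hpos : (0 : ℝ) < n.choose 2 - 1 := sub_pos.2 (by exact_mod_cast hlt)
      rw [hD, ENNReal.top_pow two_ne_zero, ENNReal.mul_top (ENNReal.ofReal_pos.2 hpos).ne']
    subst hn2
    obtain ⟨φ, hφ⟩ := exists_kacRot_mul_eq hx hy
    refine ⟨fun _ => φ, ?_⟩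
    have hzero : ∀ p : pairs 2, DSO 2 x (kacRot p.1.1 p.1.2 φ * y) ^ 2 = 0 := by
      rintro ⟨⟨i, j⟩, hp⟩
      have hij : i < j := (Finset.mem_filter.1 hp).2
      obtain rfl : i = 0 := by omega
      obtain rfl : j = 1 := by omega
      simp [hφ, DSO_self hx]
    rw [Finset.sum_eq_zero fun p _ => hzero p]
    exact lt_of_lt_of_le (pos_iff_ne_zero.2 hε) le_add_self
  · exact exists_sum_DSO_kacRot_mul_sq_lt_of_ne_top hn hD hε

end Contraction

section Regularity

variable {n : ℕ}

theorem continuous_DSO_comp {α : Type*} [TopologicalSpace α] {f g : α → Matrix (Fin n) (Fin n) ℝ}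
    (hf : Continuous f) (hg : Continuous g) (hfS : ∀ a, f a ∈ SO n) (hgS : ∀ a, g a ∈ SO n) :
    Continuous fun a => DSO n (f a) (g a) := by
  have h : Continuous fun a => ((⟨f a, hfS a⟩, ⟨g a, hgS a⟩) : SO n × SO n) :=
    (hf.subtype_mk hfS).prodMk (hg.subtype_mk hgS)
  have hcomp := continuous_DSO.comp h
  exact hcomp

theorem continuous_kacRot_mul (i j : Fin n) (y : Matrix (Fin n) (Fin n) ℝ) :
    Continuous fun θ => kacRot i j θ * y := by
  have h : Continuous (kacRot i j) := continuous_kacRot i j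
  exact h.matrix_mul continuous_const

/-- For `x, y ∈ SO(n)`, after suitable shifts of the rotation angles, which can be taken in a fixed
dense sequence, the summed squared distances contract by the factor `C(n,2) - 1`. -/
theorem exists_denseSeq_sum_DSO_kacRot_mul_sq_le (hn : 2 ≤ n) {x y : Matrix (Fin n) (Fin n) ℝ}
    (hx : x ∈ SO n) (hy : y ∈ SO n) {ε : ℝ≥0∞} (hε : ε ≠ 0) :
    ∃ k, ∑ p, DSO n x (kacRot p.1.1 p.1.2 (TopologicalSpace.denseSeq (pairs n → ℝ) k p) * y) ^ 2 ≤
      ENNReal.ofReal (n.choose 2 - 1) * DSO n x y ^ 2 + ε := by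
  by_cases htop : ENNReal.ofReal (n.choose 2 - 1) * DSO n x y ^ 2 = ⊤
  · exact ⟨0, by rw [htop, top_add]; exact le_top⟩
  obtain ⟨φ, hφ⟩ := exists_sum_DSO_kacRot_mul_sq_lt hn hx hy hε htop
  have hcont : Continuous fun φ : pairs n → ℝ =>
      ∑ p, DSO n x (kacRot p.1.1 p.1.2 (φ p) * y) ^ 2 := by
    refine continuous_finsetSum _ fun p _ => (ENNReal.continuous_pow 2).comp ?_
    exact continuous_DSO_comp continuous_const
      ((continuous_kacRot_mul p.1.1 p.1.2 y).comp (continuous_apply p)) (fun _ => hx)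
      fun φ => mul_mem_SO (kacRot_mem_SO (ne_of_mem_pairs p.2) _) hy
  obtain ⟨k, hk⟩ := (TopologicalSpace.denseRange_denseSeq (pairs n → ℝ)).exists_mem_open
    (isOpen_Iio.preimage hcont) ⟨φ, hφ⟩
  exact ⟨k, le_of_lt hk⟩

end Regularity

section Coupling

variable {n : ℕ}

/-! ### Measurability -/

instance borelSpace_matrix : BorelSpace (Matrix (Fin n) (Fin n) ℝ) :=
  (inferInstance : BorelSpace (Fin n → Fin n → ℝ))

instance secondCountableTopology_matrix : SecondCountableTopology (Matrix (Fin n) (Fin n) ℝ) :=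
  (inferInstance : SecondCountableTopology (Fin n → Fin n → ℝ))

theorem measurableSet_SO : MeasurableSet (SO n) :=
  isClosed_SO.measurableSet

theorem measurable_DSO :
    Measurable fun z : Matrix (Fin n) (Fin n) ℝ × Matrix (Fin n) (Fin n) ℝ => DSO n z.1 z.2 := by
  refine measurable_of_restrict_of_restrict_compl
    (measurableSet_SO.prod measurableSet_SO : MeasurableSet (SO n ×ˢ SO n)) ?_ ?_
  · refine Continuous.measurable ?_
    exact continuous_DSO_comp (continuous_fst.comp continuous_subtype_val)
      (continuous_snd.comp continuous_subtype_val) (fun z => z.2.1) fun z => z.2.2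
  · have h : (SO n ×ˢ SO n)ᶜ.domRestrict
        (fun z : Matrix (Fin n) (Fin n) ℝ × Matrix (Fin n) (Fin n) ℝ => DSO n z.1 z.2) =
          fun _ => ⊤ := by
      ext z
      exact DSO_eq_top z.2
    rw [h]
    exact measurable_const

theorem measurable_kacRot_mul (i j : Fin n) {α : Type*} [MeasurableSpace α] {f : α → ℝ}
    {g : α → Matrix (Fin n) (Fin n) ℝ} (hf : Measurable f) (hg : Measurable g) :
    Measurable fun a => kacRot i j (f a) * g a := by
  have h : Continuous (kacRot i j) := continuous_kacRot i j
  have h' : Measurable fun z : ℝ × Matrix (Fin n) (Fin n) ℝ => kacRot i j z.1 * z.2 :=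
    ((h.comp continuous_fst).matrix_mul continuous_snd).measurable
  have hcomp := h'.comp (hf.prodMk hg)
  exact hcomp

/-! ### The uniform measure on angles -/

instance : IsProbabilityMeasure uniformAngle where
  measure_univ := by
    have hpi : ENNReal.ofReal (2 * Real.pi) ≠ 0 := (ENNReal.ofReal_pos.2 Real.two_pi_pos).ne'
    simp [uniformAngle, -ENNReal.ofReal_mul, ENNReal.inv_mul_cancel hpi ENNReal.ofReal_ne_top]

theorem kacRot_add_two_pi (i j : Fin n) (θ : ℝ) : kacRot i j (θ + 2 * Real.pi) = kacRot i j θ := by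
  simp [kacRot]

/-- The uniform measure on angles is invariant under translations, on periodic sets. -/
theorem uniformAngle_preimage_add {A : Set ℝ} (hA : MeasurableSet A)
    (hper : Function.Periodic (· ∈ A) (2 * Real.pi)) (φ : ℝ) :
    uniformAngle ((· + φ) ⁻¹' A) = uniformAngle A := by
  have hIoc : ∀ B : Set ℝ, MeasurableSet B → uniformAngle B =
      (ENNReal.ofReal (2 * Real.pi))⁻¹ * volume (B ∩ Set.Ioc 0 (0 + 2 * Real.pi)) := by
    intro B hB
    rw [uniformAngle, ← Measure.restrict_congr_set Ioc_ae_eq_Icc, Measure.smul_apply,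
      Measure.restrict_apply hB, smul_eq_mul, zero_add]
  rw [hIoc _ (measurable_add_const φ hA), hIoc A hA]
  congr 1
  have hset : (· + φ) ⁻¹' A ∩ Set.Ioc 0 (0 + 2 * Real.pi) =
      (· + φ) ⁻¹' (A ∩ Set.Ioc φ (φ + 2 * Real.pi)) := by
    ext θ
    simp only [Set.mem_inter_iff, Set.mem_preimage, Set.mem_Ioc]
    constructor <;> rintro ⟨h, h1, h2⟩ <;> exact ⟨h, by linarith, by linarith⟩
  rw [hset, measure_preimage_add_right]
  refine (isAddFundamentalDomain_Ioc Real.two_pi_pos φ).measure_set_eq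
    (isAddFundamentalDomain_Ioc Real.two_pi_pos 0) hA ?_
  rintro ⟨g, hg⟩
  obtain ⟨k, rfl⟩ := AddSubgroup.mem_zmultiples_iff.1 hg
  ext θ
  have := hper.zsmul k θ
  simpa [AddSubgroup.vadd_def, add_comm] using this

theorem map_prod_uniformAngle_kacRot_add {α : Type*} [MeasurableSpace α] (η : Measure α) [SFinite η]
    (i j : Fin n) {φ : α → ℝ} (hφ : Measurable φ) {g : α → Matrix (Fin n) (Fin n) ℝ}
    (hg : Measurable g) :
    (η.prod uniformAngle).map (fun z => kacRot i j (z.2 + φ z.1) * g z.1) =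
      (η.prod uniformAngle).map (fun z => kacRot i j z.2 * g z.1) := by
  have h1 : Measurable fun z : α × ℝ => kacRot i j (z.2 + φ z.1) * g z.1 :=
    measurable_kacRot_mul i j (measurable_snd.add (hφ.comp measurable_fst))
      (hg.comp measurable_fst)
  have h2 : Measurable fun z : α × ℝ => kacRot i j z.2 * g z.1 :=
    measurable_kacRot_mul i j measurable_snd (hg.comp measurable_fst)
  ext s hs
  rw [Measure.map_apply h1 hs, Measure.map_apply h2 hs, Measure.prod_apply (h1 hs),
    Measure.prod_apply (h2 hs)]
  refine lintegral_congr fun a => ?_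
  refine uniformAngle_preimage_add (A := {θ | kacRot i j θ * g a ∈ s})
    (measurable_prodMk_left (h2 hs)) (fun θ => ?_) (φ a)
  simp only [Set.mem_ofPred_eq, kacRot_add_two_pi]

/-! ### The transition kernel -/

theorem measurable_kacKernel : Measurable (kacKernel n) := by
  refine Measure.measurable_of_measurable_coe _ fun s hs => ?_
  simp only [kacKernel, Measure.smul_apply, Measure.finsetSum_apply, smul_eq_mul]
  refine Measurable.const_mul (Finset.measurable_sum _ fun p _ => ?_) _
  have h : Measurable fun z : Matrix (Fin n) (Fin n) ℝ × ℝ => kacRot p.1 p.2 z.2 * z.1 :=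
    measurable_kacRot_mul p.1 p.2 measurable_snd measurable_fst
  have hp : ∀ x : Matrix (Fin n) (Fin n) ℝ,
      (uniformAngle.map fun θ => kacRot p.1 p.2 θ * x) s =
        uniformAngle (Prod.mk x ⁻¹' ((fun z => kacRot p.1 p.2 z.2 * z.1) ⁻¹' s)) :=
    fun x => Measure.map_apply (measurable_kacRot_mul _ _ measurable_id measurable_const) hs
  simp only [hp]
  exact measurable_measure_prodMk_left (h hs)

theorem bind_kacKernel (μ : Measure (Matrix (Fin n) (Fin n) ℝ)) [SFinite μ] :
    μ.bind (kacKernel n) = (n.choose 2 : ℝ≥0∞)⁻¹ •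
      ∑ p : pairs n, (μ.prod uniformAngle).map fun z => kacRot p.1.1 p.1.2 z.2 * z.1 := by
  have h : ∀ p : Fin n × Fin n,
      Measurable fun z : Matrix (Fin n) (Fin n) ℝ × ℝ => kacRot p.1 p.2 z.2 * z.1 :=
    fun p => measurable_kacRot_mul p.1 p.2 measurable_snd measurable_fst
  rw [Finset.sum_coe_sort (pairs n)
    fun p => (μ.prod uniformAngle).map fun z => kacRot p.1 p.2 z.2 * z.1]
  ext s hs
  have hp : ∀ p : Fin n × Fin n, ∀ x : Matrix (Fin n) (Fin n) ℝ,
      (uniformAngle.map fun θ => kacRot p.1 p.2 θ * x) s =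
        uniformAngle (Prod.mk x ⁻¹' ((fun z => kacRot p.1 p.2 z.2 * z.1) ⁻¹' s)) :=
    fun p x => Measure.map_apply (measurable_kacRot_mul _ _ measurable_id measurable_const) hs
  rw [Measure.bind_apply hs measurable_kacKernel.aemeasurable]
  simp only [kacKernel, Measure.smul_apply, Measure.finsetSum_apply, smul_eq_mul, hp]
  have hm : ∀ p : Fin n × Fin n, Measurable fun x : Matrix (Fin n) (Fin n) ℝ =>
      uniformAngle (Prod.mk x ⁻¹' ((fun z => kacRot p.1 p.2 z.2 * z.1) ⁻¹' s)) :=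
    fun p => measurable_measure_prodMk_left (h p hs)
  rw [lintegral_const_mul _ (Finset.measurable_sum _ fun p _ => hm p),
    lintegral_finsetSum _ fun p _ => hm p]
  congr 1
  refine Finset.sum_congr rfl fun p _ => ?_
  rw [Measure.map_apply (h p) hs, Measure.prod_apply (h p hs)]

/-! ### The coupling -/

/-- One step of two coupled Kac walks: both use the same pair of indices, and the angle of the
second is shifted by `φ`. -/
def kacCoupling
    (η : Measure (Matrix (Fin n) (Fin n) ℝ × Matrix (Fin n) (Fin n) ℝ))
    (φ : Matrix (Fin n) (Fin n) ℝ × Matrix (Fin n) (Fin n) ℝ → pairs n → ℝ) :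
    Measure (Matrix (Fin n) (Fin n) ℝ × Matrix (Fin n) (Fin n) ℝ) :=
  (n.choose 2 : ℝ≥0∞)⁻¹ • ∑ p : pairs n, (η.prod uniformAngle).map fun z =>
    (kacRot p.1.1 p.1.2 z.2 * z.1.1, kacRot p.1.1 p.1.2 (z.2 + φ z.1 p) * z.1.2)

section

variable {η : Measure (Matrix (Fin n) (Fin n) ℝ × Matrix (Fin n) (Fin n) ℝ)}
  {φ : Matrix (Fin n) (Fin n) ℝ × Matrix (Fin n) (Fin n) ℝ → pairs n → ℝ}

theorem measurable_kacCoupling_map (hφ : Measurable φ) (p : pairs n) :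
    Measurable fun z : (Matrix (Fin n) (Fin n) ℝ × Matrix (Fin n) (Fin n) ℝ) × ℝ =>
      (kacRot p.1.1 p.1.2 z.2 * z.1.1, kacRot p.1.1 p.1.2 (z.2 + φ z.1 p) * z.1.2) := by
  have hφp : Measurable fun z => φ z p := (measurable_pi_apply p).comp hφ
  exact (measurable_kacRot_mul _ _ measurable_snd (measurable_fst.comp measurable_fst)).prodMk
    (measurable_kacRot_mul _ _ (measurable_snd.add (hφp.comp measurable_fst))
      (measurable_snd.comp measurable_fst))

theorem map_prod_kacRot_mul {α : Type*} [MeasurableSpace α] {η : Measure α} [SFinite η]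
    {g : α → Matrix (Fin n) (Fin n) ℝ} (hg : Measurable g) (i j : Fin n) :
    (η.prod uniformAngle).map (fun z => kacRot i j z.2 * g z.1) =
      ((η.map g).prod uniformAngle).map (fun z => kacRot i j z.2 * z.1) := by
  have h := Measure.map_prod_map η uniformAngle hg measurable_id
  rw [Measure.map_id] at h
  rw [h, Measure.map_map (measurable_kacRot_mul i j measurable_snd measurable_fst)
    (hg.prodMap measurable_id)]
  rfl

theorem isCoupling_kacCoupling [SFinite η] (hφ : Measurable φ) :
    IsCoupling (kacCoupling η φ) ((η.map Prod.fst).bind (kacKernel n))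
      ((η.map Prod.snd).bind (kacKernel n)) := by
  constructor
  · rw [bind_kacKernel, kacCoupling, Measure.map_smul,
      Measure.map_finset_sum measurable_fst.aemeasurable]
    congr 1
    refine Finset.sum_congr rfl fun p _ => ?_
    rw [Measure.map_map measurable_fst (measurable_kacCoupling_map hφ p)]
    exact map_prod_kacRot_mul measurable_fst _ _
  · rw [bind_kacKernel, kacCoupling, Measure.map_smul,
      Measure.map_finset_sum measurable_snd.aemeasurable]
    congr 1
    refine Finset.sum_congr rfl fun p _ => ?_
    rw [Measure.map_map measurable_snd (measurable_kacCoupling_map hφ p)]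
    refine Eq.trans ?_ (map_prod_kacRot_mul measurable_snd _ _)
    exact map_prod_uniformAngle_kacRot_add η _ _ ((measurable_pi_apply p).comp hφ) measurable_snd

theorem lintegral_kacCoupling_le (hφ : Measurable φ) :
    ∫⁻ z, DSO n z.1 z.2 ^ 2 ∂kacCoupling η φ ≤ (n.choose 2 : ℝ≥0∞)⁻¹ *
      ∫⁻ z, ∑ p : pairs n, DSO n z.1 (kacRot p.1.1 p.1.2 (φ z p) * z.2) ^ 2 ∂η := by
  have hmeas : ∀ p : pairs n, Measurable
      fun z : Matrix (Fin n) (Fin n) ℝ × Matrix (Fin n) (Fin n) ℝ =>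
        DSO n z.1 (kacRot p.1.1 p.1.2 (φ z p) * z.2) ^ 2 := fun p =>
    (measurable_DSO.comp (measurable_fst.prodMk (measurable_kacRot_mul _ _
      ((measurable_pi_apply p).comp hφ) measurable_snd))).pow_const 2
  rw [kacCoupling, lintegral_smul_measure, smul_eq_mul, lintegral_finsetSum_measure,
    lintegral_finsetSum _ fun p _ => hmeas p]
  refine mul_le_mul_right (Finset.sum_le_sum fun p _ => ?_) _
  rw [lintegral_map (measurable_DSO.pow_const 2) (measurable_kacCoupling_map hφ p)]
  have hij := ne_of_mem_pairs p.2
  calc _ ≤ ∫⁻ z, DSO n z.1.1 (kacRot p.1.1 p.1.2 (φ z.1 p) * z.1.2) ^ 2 ∂η.prod uniformAngle := by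
        refine lintegral_mono fun z => ?_
        dsimp only
        rw [← kacRot_mul_kacRot hij, Matrix.mul_assoc]
        gcongr
        exact DSO_mul_left_le (kacRot_mem_SO hij _) _ _
    _ = _ := by
        have h := lintegral_prod (μ := η) (ν := uniformAngle) _
          ((hmeas p).comp measurable_fst).aemeasurable
        simpa using h

end

/-- The angle shifts in the contraction estimate can be chosen measurably. -/
theorem exists_measurable_sum_DSO_kacRot_mul_sq_le (hn : 2 ≤ n) {ε : ℝ≥0∞} (hε : ε ≠ 0) :
    ∃ φ : Matrix (Fin n) (Fin n) ℝ × Matrix (Fin n) (Fin n) ℝ → pairs n → ℝ, Measurable φ ∧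
      ∀ z, z.1 ∈ SO n → z.2 ∈ SO n →
        ∑ p, DSO n z.1 (kacRot p.1.1 p.1.2 (φ z p) * z.2) ^ 2 ≤
          ENNReal.ofReal (n.choose 2 - 1) * DSO n z.1 z.2 ^ 2 + ε := by
  classical
  let P (z : Matrix (Fin n) (Fin n) ℝ × Matrix (Fin n) (Fin n) ℝ) (k : ℕ) : Prop :=
    z ∉ SO n ×ˢ SO n ∨
      ∑ p, DSO n z.1 (kacRot p.1.1 p.1.2 (TopologicalSpace.denseSeq (pairs n → ℝ) k p) * z.2) ^ 2 ≤
        ENNReal.ofReal (n.choose 2 - 1) * DSO n z.1 z.2 ^ 2 + ε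
  have hP : ∀ z, ∃ k, P z k := by
    intro z
    by_cases hz : z ∈ SO n ×ˢ SO n
    · obtain ⟨k, hk⟩ := exists_denseSeq_sum_DSO_kacRot_mul_sq_le hn hz.1 hz.2 hε
      exact ⟨k, Or.inr hk⟩
    · exact ⟨0, Or.inl hz⟩
  have hmeas : ∀ k, MeasurableSet {z | P z k} := by
    intro k
    refine MeasurableSet.union (s₂ := {z | (_ : ℝ≥0∞) ≤ _})
      (measurableSet_SO.prod measurableSet_SO).compl (measurableSet_le ?_ ?_)
    · refine Finset.measurable_sum _ fun p _ => ?_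
      exact (measurable_DSO.comp (measurable_fst.prodMk (measurable_kacRot_mul _ _
        measurable_const measurable_snd))).pow_const 2
    · exact ((measurable_DSO.pow_const 2).const_mul _).add_const _
  refine ⟨fun z => TopologicalSpace.denseSeq (pairs n → ℝ) (Nat.find (hP z)),
    measurable_from_nat.comp (measurable_find hP hmeas), fun z h1 h2 => ?_⟩
  exact (Nat.find_spec (hP z)).resolve_left (not_not.2 ⟨h1, h2⟩)

theorem inv_mul_ofReal_sub_one {N : ℕ} (hN : 0 < N) :
    (N : ℝ≥0∞)⁻¹ * ENNReal.ofReal (N - 1) = ENNReal.ofReal (1 - 1 / N) := by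
  have hN' : (0 : ℝ) < N := by exact_mod_cast hN
  rw [← ENNReal.ofReal_natCast, ← ENNReal.ofReal_inv_of_pos hN', ← ENNReal.ofReal_mul (by positivity)]
  congr 1
  field_simp

theorem exists_isCoupling_bind_kacKernel (hn : 2 ≤ n)
    {μ ν : Measure (Matrix (Fin n) (Fin n) ℝ)} [IsProbabilityMeasure μ]
    (hμSO : μ (SO n)ᶜ = 0) (hνSO : ν (SO n)ᶜ = 0)
    {η : Measure (Matrix (Fin n) (Fin n) ℝ × Matrix (Fin n) (Fin n) ℝ)} (hη : IsCoupling η μ ν)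
    {ε : ℝ≥0∞} (hε : ε ≠ 0) :
    ∃ η', IsCoupling η' (μ.bind (kacKernel n)) (ν.bind (kacKernel n)) ∧
      ∫⁻ z, DSO n z.1 z.2 ^ 2 ∂η' ≤
        ENNReal.ofReal (1 - 1 / (n.choose 2 : ℝ)) * ∫⁻ z, DSO n z.1 z.2 ^ 2 ∂η + ε := by
  obtain ⟨rfl, rfl⟩ := hη
  have hη : IsProbabilityMeasure η :=
    Measure.isProbabilityMeasure_of_map Prod.fst
  obtain ⟨φ, hφ, hle⟩ := exists_measurable_sum_DSO_kacRot_mul_sq_le hn hε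
  refine ⟨kacCoupling η φ, isCoupling_kacCoupling hφ, (lintegral_kacCoupling_le hφ).trans ?_⟩
  have hN : 0 < n.choose 2 := Nat.choose_pos hn
  have h1 : ∀ᵐ z ∂η, z.1 ∈ SO n := ae_of_ae_map measurable_fst.aemeasurable hμSO
  have h2 : ∀ᵐ z ∂η, z.2 ∈ SO n := ae_of_ae_map measurable_snd.aemeasurable hνSO
  calc _ ≤ (n.choose 2 : ℝ≥0∞)⁻¹ *
        ∫⁻ z, (ENNReal.ofReal (n.choose 2 - 1) * DSO n z.1 z.2 ^ 2 + ε) ∂η := by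
        gcongr 1
        refine lintegral_mono_ae ?_
        filter_upwards [h1, h2] with z hz1 hz2 using hle z hz1 hz2
    _ = ENNReal.ofReal (1 - 1 / (n.choose 2 : ℝ)) * ∫⁻ z, DSO n z.1 z.2 ^ 2 ∂η +
        (n.choose 2 : ℝ≥0∞)⁻¹ * ε := by
        rw [lintegral_add_right _ measurable_const,
          lintegral_const_mul _ (measurable_DSO.pow_const 2), lintegral_const, measure_univ,
          mul_one, mul_add, ← mul_assoc, inv_mul_ofReal_sub_one hN]
    _ ≤ _ := by
        gcongr
        refine mul_le_of_le_one_left zero_le ?_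
        exact ENNReal.inv_le_one.2 (by exact_mod_cast hN)

theorem wassersteinE_bind_kacKernel_le (hn : 2 ≤ n)
    {μ ν : Measure (Matrix (Fin n) (Fin n) ℝ)} [IsProbabilityMeasure μ]
    (hμSO : μ (SO n)ᶜ = 0) (hνSO : ν (SO n)ᶜ = 0)
    {η : Measure (Matrix (Fin n) (Fin n) ℝ × Matrix (Fin n) (Fin n) ℝ)} (hη : IsCoupling η μ ν) :
    wassersteinE (DSO n) 2 (μ.bind (kacKernel n)) (ν.bind (kacKernel n)) ≤
      ENNReal.ofReal (Real.sqrt (1 - 1 / (n.choose 2 : ℝ))) *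
        (∫⁻ z, DSO n z.1 z.2 ^ (2 : ℝ) ∂η) ^ (1 / (2 : ℝ)) := by
  have hsq : wassersteinE (DSO n) 2 (μ.bind (kacKernel n)) (ν.bind (kacKernel n)) ^ (2 : ℝ) ≤
      ENNReal.ofReal (1 - 1 / (n.choose 2 : ℝ)) * ∫⁻ z, DSO n z.1 z.2 ^ (2 : ℝ) ∂η := by
    refine ENNReal.le_of_forall_pos_le_add fun ε hε _ => ?_
    obtain ⟨η', hη', hle⟩ := exists_isCoupling_bind_kacKernel hn hμSO hνSO hη
      (ε := ε) (by exact_mod_cast hε.ne')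
    simp only [ENNReal.rpow_two]
    refine le_trans ?_ hle
    have hW : wassersteinE (DSO n) 2 (μ.bind (kacKernel n)) (ν.bind (kacKernel n)) ≤
        (∫⁻ z, DSO n z.1 z.2 ^ (2 : ℝ) ∂η') ^ (1 / (2 : ℝ)) := iInf₂_le η' hη'
    rw [one_div, ENNReal.le_rpow_inv_iff two_pos] at hW
    simpa only [ENNReal.rpow_two] using hW
  rw [← ENNReal.le_rpow_inv_iff two_pos, ENNReal.mul_rpow_of_nonneg _ _ (by norm_num)] at hsq
  refine hsq.trans_eq ?_
  have hnn : (0 : ℝ) ≤ 1 - 1 / (n.choose 2 : ℝ) := by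
    have : (1 : ℝ) ≤ n.choose 2 := by exact_mod_cast Nat.choose_pos hn
    rw [sub_nonneg]
    exact div_le_one_of_le₀ this (by positivity)
  rw [Real.sqrt_eq_rpow, ENNReal.ofReal_rpow_of_nonneg hnn (by norm_num), one_div (2 : ℝ)]

end Coupling

/-- **Lemma 1.** For every `n ≥ 2`, Kac's random walk kernel `K` on `SO(n)` is
`√(1 - 1/C(n,2))`-Lipschitz in the `L²` Wasserstein metric for the intrinsic metric `D`:
for all probability measures `μ, ν` on `SO(n)`,
`W_{D,2}(μK, νK) ≤ √(1 - 1/C(n,2)) · W_{D,2}(μ, ν)`. -/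
theorem kac_walk_kernel_contracting (n : ℕ) (hn : 2 ≤ n)
    (μ ν : Measure (Matrix (Fin n) (Fin n) ℝ))
    (hμprob : IsProbabilityMeasure μ) (hνprob : IsProbabilityMeasure ν)
    (hμSO : μ (SO n)ᶜ = 0) (hνSO : ν (SO n)ᶜ = 0) :
    wassersteinE (DSO n) 2 (μ.bind (kacKernel n)) (ν.bind (kacKernel n)) ≤
      ENNReal.ofReal (Real.sqrt (1 - 1 / (n.choose 2 : ℝ))) *
        wassersteinE (DSO n) 2 μ ν := by
  have hprod : IsCoupling (μ.prod ν) μ ν := ⟨by simp, by simp⟩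
  set c := ENNReal.ofReal (Real.sqrt (1 - 1 / (n.choose 2 : ℝ))) with hc
  by_cases hc0 : c = 0
  · have h := wassersteinE_bind_kacKernel_le hn hμSO hνSO hprod
    rw [← hc, hc0, zero_mul] at h
    exact h.trans zero_le
  · have hctop : c ≠ ⊤ := ENNReal.ofReal_ne_top
    rw [wassersteinE.eq_def (DSO n) 2 μ ν, ENNReal.mul_iInf_of_ne hc0 hctop]
    refine le_iInf fun η => ?_
    rw [ENNReal.mul_iInf_of_ne hc0 hctop]
    exact le_iInf fun hη => wassersteinE_bind_kacKernel_le hn hμSO hνSO hη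

end
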